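/- A class H in Pic_r is semi-standard if and only if it can be written as an orthogonal sum H = A + n_1F_1 + ⋯ + n_sF_s (the case s = 0 allowed), where A is a standard class, each n_i is a positive integer, F_1, …, F_s are pairwise orthogonal exceptional classes, and A·F_i = 0 for all i. -/

import Mathlib

open Finset

/-- The intersection form on `Pic_r = ℤ^{r+1}`: the symmetric bilinear form with
`E_0·E_0 = 1`, `E_i·E_i = -1` for `1 ≤ i ≤ r`, and `E_i·E_j = 0` for `i ≠ j`. -/
def inter {r : ℕ} (x y : Fin (r + 1) → ℤ) : ℤ :=
  2 * (x 0 * y 0) - ∑ i, x i * y i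

/-- The standard basis class `E_i` of `Pic_r`. -/
def Eb (r : ℕ) (i : Fin (r + 1)) : Fin (r + 1) → ℤ :=
  fun j => if j = i then 1 else 0

/-- The canonical class `K = -3E_0 + E_1 + ⋯ + E_r`. -/
def Kc (r : ℕ) : Fin (r + 1) → ℤ :=
  fun j => if j = 0 then -3 else 1

/-- The roots `r_0 = E_0 - E_1 - E_2 - E_3` and `r_i = E_i - E_{i+1}` for `1 ≤ i ≤ r-1`. -/
def root (r : ℕ) (i : Fin r) : Fin (r + 1) → ℤ :=
  if (i : ℕ) = 0 then Eb r 0 - Eb r 1 - Eb r 2 - Eb r 3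
  else Eb r i.castSucc - Eb r i.succ

/-- The reflection `σ_v(x) = x + (x·v) v` in the root `v`. -/
def reflect {r : ℕ} (v x : Fin (r + 1) → ℤ) : Fin (r + 1) → ℤ :=
  x + inter x v • v

/-- Membership in the Weyl group `W_r`: the group of transformations of `Pic_r`
generated by the reflections `σ_i(x) = x + (x·r_i) r_i`, `0 ≤ i ≤ r-1` (since each
generator is an involution, the submonoid generated coincides with the subgroup
generated). -/
def InWeyl (r : ℕ) (f : (Fin (r + 1) → ℤ) → (Fin (r + 1) → ℤ)) : Prop :=
  f ∈ Submonoid.closure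
    { g : Function.End (Fin (r + 1) → ℤ) | ∃ i : Fin r, g = reflect (root r i) }

/-- `H = dE_0 - m_1E_1 - ⋯ - m_rE_r` (so `d = H 0`, `m_i = -H i`) is E-standard:
`d ≥ m_1 ≥ ⋯ ≥ m_r ≥ 0`, `d ≥ m_1 + m_2` and `d ≥ m_1 + m_2 + m_3`. -/
def EStandard (r : ℕ) (H : Fin (r + 1) → ℤ) : Prop :=
  -H 1 ≤ H 0 ∧
  (∀ i j : Fin (r + 1), 1 ≤ (i : ℕ) → i ≤ j → -H j ≤ -H i) ∧
  0 ≤ -H (Fin.last r) ∧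
  -H 1 + -H 2 ≤ H 0 ∧
  -H 1 + -H 2 + -H 3 ≤ H 0

/-- `H = dE_0 - m_1E_1 - ⋯ - m_rE_r` is E-semi-standard: `d ≥ 0`,
`d ≥ m_1 ≥ ⋯ ≥ m_r` and `d ≥ m_1 + m_2 + m_3` (the `m_i` may be negative). -/
def ESemiStandard (r : ℕ) (H : Fin (r + 1) → ℤ) : Prop :=
  0 ≤ H 0 ∧
  -H 1 ≤ H 0 ∧
  (∀ i j : Fin (r + 1), 1 ≤ (i : ℕ) → i ≤ j → -H j ≤ -H i) ∧
  -H 1 + -H 2 + -H 3 ≤ H 0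

/-- A class is standard if its image under some element of `W_r` is E-standard. -/
def Standard (r : ℕ) (H : Fin (r + 1) → ℤ) : Prop :=
  ∃ f, InWeyl r f ∧ EStandard r (f H)

/-- A class is semi-standard if its image under some element of `W_r` is
E-semi-standard. -/
def SemiStandard (r : ℕ) (H : Fin (r + 1) → ℤ) : Prop :=
  ∃ f, InWeyl r f ∧ ESemiStandard r (f H)

/-- An exceptional class: an element of the `W_r`-orbit of `E_r`. -/
def Exceptional (r : ℕ) (x : Fin (r + 1) → ℤ) : Prop :=
  ∃ f, InWeyl r f ∧ x = f (Eb r (Fin.last r))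

/-- A line class: an element of the `W_r`-orbit of `E_0`. -/
def LineClass (r : ℕ) (x : Fin (r + 1) → ℤ) : Prop :=
  ∃ f, InWeyl r f ∧ x = f (Eb r 0)

/-- A pencil class: an element of the `W_r`-orbit of `E_0 - E_1`. -/
def PencilClass (r : ℕ) (x : Fin (r + 1) → ℤ) : Prop :=
  ∃ f, InWeyl r f ∧ x = f (Eb r 0 - Eb r 1)

/-- The elliptic generating class `C_i = 3E_0 - E_1 - ⋯ - E_i`. -/
def Cc (r : ℕ) (i : Fin (r + 1)) : Fin (r + 1) → ℤ :=
  fun j => if j = 0 then 3 else if j ≤ i then -1 else 0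

/-- The Euler characteristic `χ(H) = 1 + (H·H - H·K)/2`. -/
def chi (r : ℕ) (H : Fin (r + 1) → ℤ) : ℤ :=
  1 + (inter H H - inter H (Kc r)) / 2

/-! Being semi-standard turns out to be a convex condition: it means having non-negative
intersection with every line class and every pencil class. Indeed `E_0`, `E_0 - E_1` and every
E-semi-standard class lie in the fundamental chamber, and every point of the Weyl orbit of a point
`y` of that chamber is reached from `y` by successively adding positive multiples of simple roots,
so that `x·y ≤ x·f(y)` for `x` in the chamber. Conversely, a class that is non-negative on line and
pencil classes can be moved into the chamber by minimising its intersection number with a regular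
class over its orbit. As standard and exceptional classes are semi-standard, so are their
non-negative combinations.

For the other direction, one decomposes an E-semi-standard class `H`: project it orthogonally away
from `L = E_0 - E_1 - E_2` if `H·L < 0`, then split off `E_i` for every negative `m_i`. -/

section SimplyLaced

open Module

variable {R M ι : Type*} [CommRing R] [AddCommGroup M] [Module R M]

/-- A simply laced system of simple roots `α i` with coroots `f i`: every Cartan integer
`f i (α j)` with `i ≠ j` is `0` or `-1`. Neither family is required to be finite or linearly
independent. -/
structure SimplyLaced (α : ι → M) (f : ι → Dual R M) : Prop where
  self (i : ι) : f i (α i) = 2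
  orthogonal_or_adjacent {i j : ι} (hij : i ≠ j) :
    f i (α j) = 0 ∧ f j (α i) = 0 ∨ f i (α j) = -1 ∧ f j (α i) = -1

theorem preReflection_comm {x y : M} {f g : Dual R M} (hfy : f y = 0) (hgx : g x = 0) (z : M) :
    preReflection x f (preReflection y g z) = preReflection y g (preReflection x f z) := by
  simp only [preReflection_apply, map_sub, map_smul, hfy, hgx, zero_smul, sub_zero]
  abel

theorem preReflection_braid {x y : M} {f g : Dual R M} (hfx : f x = 2) (hgy : g y = 2)
    (hfy : f y = -1) (hgx : g x = -1) (z : M) :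
    preReflection x f (preReflection y g (preReflection x f z)) =
      preReflection y g (preReflection x f (preReflection y g z)) := by
  simp only [preReflection_apply, map_sub, map_smul, hfx, hgy, hfy, hgx]
  module

variable [LinearOrder R]

/-- `Descends α f x n y` says that `y` is reached from `x` by `n` simple reflections, each of which
subtracts a positive multiple of a simple root. -/
inductive Descends (α : ι → M) (f : ι → Dual R M) (x : M) : ℕ → M → Prop
  | refl : Descends α f x 0 x
  | step {n : ℕ} {y : M} (i : ι) (hy : Descends α f x n y) (hi : 0 < f i y) :
    Descends α f x (n + 1) (preReflection (α i) (f i) y)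

variable {α : ι → M} {f : ι → Dual R M} {x : M}

theorem Descends.map_le [IsOrderedRing R] {φ : Dual R M} (hφ : ∀ i, 0 ≤ φ (α i)) {n : ℕ} {y : M}
    (h : Descends α f x n y) : φ y ≤ φ x := by
  induction h with
  | refl => exact le_rfl
  | step i _ hi ih =>
    rw [preReflection_apply, map_sub, map_smul, smul_eq_mul]
    exact (sub_le_self _ (mul_nonneg hi.le (hφ i))).trans ih

/- Induction on `n`. If the last step used an adjacent root `α j`, the hexagon spanned by `α i` and
`α j` is traversed the other way round. -/
theorem Descends.exists_pred [IsStrictOrderedRing R] (hα : SimplyLaced α f)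
    (hx : ∀ i, 0 ≤ f i x) {n : ℕ} {y : M} (h : Descends α f x n y) {i : ι} (hi : f i y < 0) :
    ∃ m, n = m + 1 ∧ Descends α f x m (preReflection (α i) (f i) y) := by
  induction n using Nat.strong_induction_on generalizing y i with
  | _ n ih =>
  cases h with
  | refl => exact absurd hi (hx i).not_gt
  | @step n y j hy hj =>
    refine ⟨n, rfl, ?_⟩
    rcases eq_or_ne i j with rfl | hij
    · rwa [involutive_preReflection (hα.self i)]
    rcases hα.orthogonal_or_adjacent hij with ⟨hfij, hfji⟩ | ⟨hfij, hfji⟩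
    · have hiy : f i y < 0 := by simpa [preReflection_apply, hfij] using hi
      obtain ⟨m, rfl, hm⟩ := ih n n.lt_succ_self hy hiy
      rw [preReflection_comm hfij hfji]
      exact .step j hm (by simpa [preReflection_apply, hfji] using hj)
    · have hsum : f i y + f j y < 0 := by simpa [preReflection_apply, hfij] using hi
      obtain ⟨m, rfl, hm⟩ := ih n n.lt_succ_self hy (i := i) (by linarith)
      obtain ⟨p, rfl, hp⟩ := ih m (by omega) hm (i := j)
        (by simpa [preReflection_apply, hfji, add_comm] using hsum)
      set u := preReflection (α j) (f j) (preReflection (α i) (f i) y) with hu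
      have hui : f i u = f j y := by
        simp only [hu, preReflection_apply, map_sub, map_smul, smul_eq_mul, hα.self, hfij, hfji]
        ring
      have huj : f j (preReflection (α i) (f i) u) = -f i y := by
        simp only [hu, preReflection_apply, map_sub, map_smul, smul_eq_mul, hα.self, hfij, hfji]
        ring
      have hexagon : preReflection (α i) (f i) (preReflection (α j) (f j) y) =
          preReflection (α j) (f j) (preReflection (α i) (f i) u) := by
        rw [hu, ← preReflection_braid (hα.self i) (hα.self j) hfij hfji,
          involutive_preReflection (hα.self i)]
      rw [hexagon]
      exact .step j (.step i hp (hui ▸ hj)) (by linarith)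

theorem Descends.exists_preReflection [IsStrictOrderedRing R] (hα : SimplyLaced α f)
    (hx : ∀ i, 0 ≤ f i x) {n : ℕ} {y : M} (h : Descends α f x n y) (i : ι) :
    ∃ m, Descends α f x m (preReflection (α i) (f i) y) := by
  rcases lt_trichotomy (f i y) 0 with hi | hi | hi
  · obtain ⟨m, -, hm⟩ := h.exists_pred hα hx hi
    exact ⟨m, hm⟩
  · exact ⟨n, by simpa [preReflection_apply, hi] using h⟩
  · exact ⟨n + 1, h.step i hi⟩

end SimplyLaced

section Intersection

variable {r : ℕ}

theorem inter_comm (x y : Fin (r + 1) → ℤ) : inter x y = inter y x := by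
  simp only [inter, mul_comm]

/-- The intersection form as a bilinear form. -/
def interForm (r : ℕ) : LinearMap.BilinForm ℤ (Fin (r + 1) → ℤ) :=
  LinearMap.mk₂ ℤ inter
    (fun x y z => by simp only [inter, Pi.add_apply, add_mul, sum_add_distrib]; ring)
    (fun c x y => by
      simp only [inter, Pi.smul_apply, smul_eq_mul, mul_assoc, ← mul_sum]; ring)
    (fun x y z => by simp only [inter, Pi.add_apply, mul_add, sum_add_distrib]; ring)
    (fun c x y => by
      simp only [inter, Pi.smul_apply, smul_eq_mul, mul_left_comm _ c, ← mul_sum]; ring)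

theorem interForm_apply (x y : Fin (r + 1) → ℤ) : interForm r x y = inter x y := rfl

theorem inter_add_left (x y z : Fin (r + 1) → ℤ) : inter (x + y) z = inter x z + inter y z :=
  (interForm r).map_add₂ x y z

theorem inter_add_right (x y z : Fin (r + 1) → ℤ) : inter x (y + z) = inter x y + inter x z :=
  map_add (interForm r x) y z

theorem inter_sub_right (x y z : Fin (r + 1) → ℤ) : inter x (y - z) = inter x y - inter x z :=
  map_sub (interForm r x) y z

theorem inter_smul_left (c : ℤ) (x y : Fin (r + 1) → ℤ) : inter (c • x) y = c * inter x y :=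
  (interForm r).map_smul₂ c x y

theorem inter_smul_right (c : ℤ) (x y : Fin (r + 1) → ℤ) : inter x (c • y) = c * inter x y :=
  map_smul (interForm r x) c y

theorem inter_sum_right {ι : Type*} (s : Finset ι) (x : Fin (r + 1) → ℤ)
    (y : ι → Fin (r + 1) → ℤ) : inter x (∑ i ∈ s, y i) = ∑ i ∈ s, inter x (y i) :=
  map_sum (interForm r x) y s

theorem inter_Eb_zero (x : Fin (r + 1) → ℤ) : inter x (Eb r 0) = x 0 := by
  simp only [inter, Eb, if_true, mul_one, mul_ite, mul_zero, sum_ite_eq', mem_univ]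
  ring

theorem inter_Eb_of_ne_zero (x : Fin (r + 1) → ℤ) {i : Fin (r + 1)} (hi : i ≠ 0) :
    inter x (Eb r i) = -x i := by
  simp [inter, Eb, hi.symm]

theorem inter_Eb_Eb {i j : Fin (r + 1)} (hj : j ≠ 0) (hij : i ≠ j) :
    inter (Eb r i) (Eb r j) = 0 := by
  rw [inter_Eb_of_ne_zero _ hj, Eb, if_neg hij.symm, neg_zero]

end Intersection

section Roots

variable {r : ℕ}

theorem val_one_two_three (hr : 3 ≤ r) :
    ((1 : Fin (r + 1)) : ℕ) = 1 ∧ ((2 : Fin (r + 1)) : ℕ) = 2 ∧ ((3 : Fin (r + 1)) : ℕ) = 3 :=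
  ⟨Nat.mod_eq_of_lt (show 1 < r + 1 by omega), Nat.mod_eq_of_lt (show 2 < r + 1 by omega),
    Nat.mod_eq_of_lt (show 3 < r + 1 by omega)⟩

theorem one_two_three_ne_zero (hr : 3 ≤ r) :
    (1 : Fin (r + 1)) ≠ 0 ∧ (2 : Fin (r + 1)) ≠ 0 ∧ (3 : Fin (r + 1)) ≠ 0 := by
  simp only [ne_eq, Fin.ext_iff, Fin.val_zero, val_one_two_three hr]
  decide

theorem root_of_val_eq_zero {i : Fin r} (hi : (i : ℕ) = 0) :
    root r i = Eb r 0 - Eb r 1 - Eb r 2 - Eb r 3 :=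
  if_pos hi

theorem root_of_val_ne_zero {i : Fin r} (hi : (i : ℕ) ≠ 0) :
    root r i = Eb r i.castSucc - Eb r i.succ :=
  if_neg hi

theorem castSucc_ne_zero_of_val_ne_zero {i : Fin r} (hi : (i : ℕ) ≠ 0) : i.castSucc ≠ 0 := by
  simpa [Fin.ext_iff] using hi

theorem root_apply_of_val_eq_zero (hr : 3 ≤ r) {i : Fin r} (hi : (i : ℕ) = 0) (j : Fin (r + 1)) :
    root r i j = if (j : ℕ) = 0 then 1 else if (j : ℕ) ≤ 3 then -1 else 0 := by
  simp only [root_of_val_eq_zero hi, Pi.sub_apply, Eb, Fin.ext_iff, Fin.val_zero,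
    val_one_two_three hr]
  split_ifs <;> omega

theorem inter_root_of_val_eq_zero (hr : 3 ≤ r) (x : Fin (r + 1) → ℤ) {i : Fin r}
    (hi : (i : ℕ) = 0) : inter x (root r i) = x 0 + x 1 + x 2 + x 3 := by
  obtain ⟨h1, h2, h3⟩ := one_two_three_ne_zero hr
  rw [root_of_val_eq_zero hi, inter_sub_right, inter_sub_right, inter_sub_right, inter_Eb_zero,
    inter_Eb_of_ne_zero x h1, inter_Eb_of_ne_zero x h2, inter_Eb_of_ne_zero x h3]
  ring

theorem inter_root_of_val_ne_zero (x : Fin (r + 1) → ℤ) {i : Fin r} (hi : (i : ℕ) ≠ 0) :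
    inter x (root r i) = x i.succ - x i.castSucc := by
  rw [root_of_val_ne_zero hi, inter_sub_right,
    inter_Eb_of_ne_zero x (castSucc_ne_zero_of_val_ne_zero hi),
    inter_Eb_of_ne_zero x i.succ_ne_zero]
  ring

theorem inter_root_self (hr : 3 ≤ r) (i : Fin r) : inter (root r i) (root r i) = -2 := by
  by_cases hi : (i : ℕ) = 0
  · rw [inter_root_of_val_eq_zero hr _ hi]
    simp only [root_apply_of_val_eq_zero hr hi, Fin.val_zero, val_one_two_three hr]
    norm_num
  · rw [inter_root_of_val_ne_zero _ hi]
    simp [root_of_val_ne_zero hi, Eb, Fin.ext_iff]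

theorem inter_root_of_ne (hr : 3 ≤ r) {i j : Fin r} (hij : i ≠ j) :
    inter (root r i) (root r j) = 0 ∨ inter (root r i) (root r j) = 1 := by
  wlog hj : (j : ℕ) ≠ 0 generalizing i j
  · rw [inter_comm]
    exact this hij.symm fun hi => hij (Fin.ext (by omega))
  have hij' : (i : ℕ) ≠ j := Fin.val_ne_of_ne hij
  rw [inter_root_of_val_ne_zero _ hj]
  by_cases hi : (i : ℕ) = 0
  · rw [root_apply_of_val_eq_zero hr hi, root_apply_of_val_eq_zero hr hi, Fin.val_succ,
      Fin.val_castSucc, if_neg j.val.succ_ne_zero, if_neg hj]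
    split_ifs <;> omega
  · simp only [root_of_val_ne_zero hi, Pi.sub_apply, Eb, Fin.ext_iff, Fin.val_succ,
      Fin.val_castSucc]
    split_ifs <;> omega

/- The signs turn a form that is negative on the roots into a Cartan matrix with diagonal `2`. -/
theorem simplyLaced_root (hr : 3 ≤ r) :
    SimplyLaced (fun i => -root r i) (fun i => interForm r (root r i)) where
  self i := by rw [map_neg, interForm_apply, inter_root_self hr, neg_neg]
  orthogonal_or_adjacent {i j} hij := by
    simp only [map_neg, interForm_apply, inter_comm (root r j), and_self]
    rcases inter_root_of_ne hr hij with h | h <;> simp [h]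

theorem reflect_eq_preReflection (v x : Fin (r + 1) → ℤ) :
    reflect v x = Module.preReflection (-v) (interForm r v) x := by
  rw [Module.preReflection_apply, smul_neg, sub_neg_eq_add, interForm_apply, inter_comm v]
  rfl

theorem inter_reflect_left (v x y : Fin (r + 1) → ℤ) :
    inter (reflect v x) y = inter x y + inter x v * inter v y := by
  rw [reflect, inter_add_left, inter_smul_left]

theorem inter_reflect_right (v x y : Fin (r + 1) → ℤ) :
    inter x (reflect v y) = inter x y + inter x v * inter v y := by
  rw [reflect, inter_add_right, inter_smul_right, inter_comm y v, mul_comm]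

theorem inter_reflect_reflect {v : Fin (r + 1) → ℤ} (hv : inter v v = -2)
    (x y : Fin (r + 1) → ℤ) : inter (reflect v x) (reflect v y) = inter x y := by
  rw [inter_reflect_left, inter_reflect_right, inter_reflect_right, hv]
  ring

end Roots

section Weyl

variable {r : ℕ} {f g : (Fin (r + 1) → ℤ) → (Fin (r + 1) → ℤ)}

theorem inWeyl_id : InWeyl r id :=
  one_mem (Submonoid.closure (M := Function.End (Fin (r + 1) → ℤ)) _)

theorem inWeyl_reflect (i : Fin r) : InWeyl r (reflect (root r i)) :=
  Submonoid.subset_closure (M := Function.End (Fin (r + 1) → ℤ)) ⟨i, rfl⟩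

theorem InWeyl.comp (hf : InWeyl r f) (hg : InWeyl r g) : InWeyl r (f ∘ g) :=
  mul_mem (M := Function.End (Fin (r + 1) → ℤ)) hf hg

@[elab_as_elim]
theorem InWeyl.induction {motive : (f : (Fin (r + 1) → ℤ) → (Fin (r + 1) → ℤ)) → InWeyl r f → Prop}
    (id : motive id inWeyl_id)
    (reflect_comp : ∀ i f (hf : InWeyl r f), motive f hf →
      motive (reflect (root r i) ∘ f) ((inWeyl_reflect i).comp hf))
    (hf : InWeyl r f) : motive f hf := by
  refine Submonoid.closure_induction_left (M := Function.End (Fin (r + 1) → ℤ)) id ?_ hf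
  rintro _ ⟨i, rfl⟩ f hf ih
  exact reflect_comp i f hf ih

theorem InWeyl.exists_linearEquiv (hr : 3 ≤ r) (hf : InWeyl r f) :
    ∃ e : (Fin (r + 1) → ℤ) ≃ₗ[ℤ] (Fin (r + 1) → ℤ), ⇑e = f ∧ InWeyl r e.symm ∧
      ∀ x y, inter (e x) (e y) = inter x y := by
  induction hf using InWeyl.induction with
  | id => exact ⟨LinearEquiv.refl ℤ _, rfl, inWeyl_id, fun _ _ => rfl⟩
  | reflect_comp i f _ ih =>
    obtain ⟨e, rfl, hsymm, hinter⟩ := ih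
    let s := Module.reflection ((simplyLaced_root hr).self i)
    have hs : ⇑s = reflect (root r i) := funext fun x => (reflect_eq_preReflection _ x).symm
    refine ⟨e.trans s, ?_, ?_, fun x y => ?_⟩
    · rw [← hs]
      rfl
    · exact hsymm.comp (hs ▸ inWeyl_reflect i)
    · rw [LinearEquiv.trans_apply, LinearEquiv.trans_apply, hs,
        inter_reflect_reflect (inter_root_self hr i), hinter]

end Weyl

section Dominance

variable {r : ℕ} {f : (Fin (r + 1) → ℤ) → (Fin (r + 1) → ℤ)} {x y H : Fin (r + 1) → ℤ}

/-- A class is dominant if it is non-negative on every simple root, i.e. if it lies in the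
fundamental chamber of the Weyl group. -/
def Dominant (r : ℕ) (H : Fin (r + 1) → ℤ) : Prop :=
  ∀ i : Fin r, 0 ≤ inter H (root r i)

theorem InWeyl.exists_descends (hr : 3 ≤ r) (hy : Dominant r y) (hf : InWeyl r f) :
    ∃ n, Descends (fun i => -root r i) (fun i => interForm r (root r i)) y n (f y) := by
  induction hf using InWeyl.induction with
  | id => exact ⟨0, .refl⟩
  | reflect_comp i f _ ih =>
    obtain ⟨n, hn⟩ := ih
    rw [Function.comp_apply, reflect_eq_preReflection]
    refine hn.exists_preReflection (simplyLaced_root hr) (fun j => ?_) i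
    rw [interForm_apply, inter_comm]
    exact hy j

theorem InWeyl.inter_le (hr : 3 ≤ r) (hx : Dominant r x) (hy : Dominant r y) (hf : InWeyl r f) :
    inter x y ≤ inter x (f y) := by
  obtain ⟨n, hn⟩ := hf.exists_descends hr hy
  have hle : -inter x (f y) ≤ -inter x y :=
    hn.map_le (φ := -interForm r x) fun i => by
      rw [LinearMap.neg_apply, map_neg, neg_neg]
      exact hx i
  exact neg_le_neg_iff.mp hle

theorem dominant_iff (hr : 3 ≤ r) :
    Dominant r H ↔ (∀ i j : Fin (r + 1), 1 ≤ (i : ℕ) → i ≤ j → -H j ≤ -H i) ∧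
      -H 1 + -H 2 + -H 3 ≤ H 0 := by
  obtain ⟨k, rfl⟩ := Nat.exists_eq_add_of_le' (Nat.one_le_of_lt hr)
  refine ⟨fun hH => ⟨fun i j hi hij => ?_, ?_⟩, fun h i => ?_⟩
  · have hmono : Monotone fun i : Fin (k + 1) => H i.succ := by
      refine Fin.monotone_iff_le_succ.mpr fun i => ?_
      have := hH i.succ
      rwa [inter_root_of_val_ne_zero _ i.val.succ_ne_zero, sub_nonneg, ← Fin.succ_castSucc] at this
    obtain ⟨i, rfl⟩ := Fin.exists_succ_eq.mpr (Fin.pos_iff_ne_zero.mp hi)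
    obtain ⟨j, rfl⟩ := Fin.exists_succ_eq.mpr (Fin.pos_iff_ne_zero.mp (Nat.lt_of_lt_of_le hi hij))
    exact neg_le_neg (hmono (Fin.succ_le_succ_iff.mp hij))
  · have := hH 0
    rw [inter_root_of_val_eq_zero hr _ rfl] at this
    linarith
  · by_cases hi : (i : ℕ) = 0
    · rw [inter_root_of_val_eq_zero hr _ hi]
      linarith [h.2]
    · rw [inter_root_of_val_ne_zero _ hi, sub_nonneg]
      exact neg_le_neg_iff.mp
        (h.1 _ _ (Nat.one_le_iff_ne_zero.mpr hi) Fin.castSucc_lt_succ.le)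

theorem inter_Eb_zero_sub (x : Fin (r + 1) → ℤ) {i : Fin (r + 1)} (hi : i ≠ 0) :
    inter x (Eb r 0 - Eb r i) = x 0 + x i := by
  rw [inter_sub_right, inter_Eb_zero, inter_Eb_of_ne_zero x hi, sub_neg_eq_add]

theorem eSemiStandard_iff (hr : 3 ≤ r) :
    ESemiStandard r H ↔ Dominant r H ∧ 0 ≤ inter H (Eb r 0) ∧
      0 ≤ inter H (Eb r 0 - Eb r 1) := by
  rw [dominant_iff hr, inter_Eb_zero, inter_Eb_zero_sub H (one_two_three_ne_zero hr).1,
    ← neg_le_iff_add_nonneg]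
  unfold ESemiStandard
  tauto

theorem dominant_Eb_zero (hr : 3 ≤ r) : Dominant r (Eb r 0) := by
  intro i
  by_cases hi : (i : ℕ) = 0
  · rw [inter_comm, inter_Eb_zero, root_apply_of_val_eq_zero hr hi, Fin.val_zero, if_pos rfl]
    exact zero_le_one
  · rw [inter_root_of_val_ne_zero _ hi]
    simp [Eb, Fin.ext_iff, hi]

theorem dominant_Eb_zero_sub_Eb_one (hr : 3 ≤ r) : Dominant r (Eb r 0 - Eb r 1) := by
  obtain ⟨h1, -, -⟩ := val_one_two_three hr
  intro i
  by_cases hi : (i : ℕ) = 0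
  · rw [inter_comm, inter_Eb_zero_sub _ (one_two_three_ne_zero hr).1,
      root_apply_of_val_eq_zero hr hi, root_apply_of_val_eq_zero hr hi, h1, Fin.val_zero]
    simp
  · rw [inter_root_of_val_ne_zero _ hi]
    simp only [Pi.sub_apply, Eb, Fin.ext_iff, Fin.val_succ, Fin.val_castSucc, Fin.val_zero, h1]
    split_ifs <;> omega

theorem exists_inWeyl_dominant {ρ : Fin (r + 1) → ℤ}
    (hρ : ∀ i, 0 < inter ρ (root r i)) {b : ℤ} (hb : ∀ f, InWeyl r f → b ≤ inter (f H) ρ) :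
    ∃ f, InWeyl r f ∧ Dominant r (f H) := by
  obtain ⟨_, ⟨f, hf, rfl⟩, hmin⟩ := Int.exists_least_of_bdd
    (P := fun m => ∃ f, InWeyl r f ∧ inter (f H) ρ = m)
    ⟨b, by rintro _ ⟨f, hf, rfl⟩; exact hb f hf⟩ ⟨_, id, inWeyl_id, rfl⟩
  refine ⟨f, hf, fun i => ?_⟩
  have hle : inter (f H) ρ ≤ inter (reflect (root r i) (f H)) ρ :=
    hmin _ ⟨_, (inWeyl_reflect i).comp hf, rfl⟩
  rw [inter_reflect_left, inter_comm (root r i) ρ] at hle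
  exact nonneg_of_mul_nonneg_left (by linarith) (hρ i)

end Dominance

section Orbits

variable {r : ℕ} {f : (Fin (r + 1) → ℤ) → (Fin (r + 1) → ℤ)} {x : Fin (r + 1) → ℤ}

theorem LineClass.map (hx : LineClass r x) (hf : InWeyl r f) : LineClass r (f x) := by
  obtain ⟨g, hg, rfl⟩ := hx
  exact ⟨_, hf.comp hg, rfl⟩

theorem PencilClass.map (hx : PencilClass r x) (hf : InWeyl r f) : PencilClass r (f x) := by
  obtain ⟨g, hg, rfl⟩ := hx
  exact ⟨_, hf.comp hg, rfl⟩

theorem Exceptional.map (hx : Exceptional r x) (hf : InWeyl r f) : Exceptional r (f x) := by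
  obtain ⟨g, hg, rfl⟩ := hx
  exact ⟨_, hf.comp hg, rfl⟩

theorem reflect_root_Eb_zero {i : Fin r} (hi : (i : ℕ) ≠ 0) :
    reflect (root r i) (Eb r 0) = Eb r 0 := by
  have h : inter (Eb r 0) (root r i) = 0 := by
    rw [inter_root_of_val_ne_zero _ hi]
    simp [Eb, Fin.ext_iff, hi]
  rw [reflect, h, zero_smul, add_zero]

theorem reflect_root_Eb_castSucc {i : Fin r} (hi : (i : ℕ) ≠ 0) :
    reflect (root r i) (Eb r i.castSucc) = Eb r i.succ := by
  have h : inter (Eb r i.castSucc) (root r i) = -1 := by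
    rw [inter_root_of_val_ne_zero _ hi]
    simp [Eb, Fin.ext_iff]
  rw [reflect, h, root_of_val_ne_zero hi]
  abel

theorem exists_inWeyl_map_Eb (hr : 3 ≤ r) {i : Fin (r + 1)} (hi : i ≠ 0) :
    ∃ f, InWeyl r f ∧ f (Eb r 0) = Eb r 0 ∧ f (Eb r 1) = Eb r i := by
  obtain ⟨k, rfl⟩ := Nat.exists_eq_add_of_le' (Nat.one_le_of_lt hr)
  obtain ⟨i, rfl⟩ := Fin.exists_succ_eq.mpr hi
  induction i using Fin.induction with
  | zero => exact ⟨id, inWeyl_id, rfl, rfl⟩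
  | succ i ih =>
    obtain ⟨f, hf, h0, h1⟩ := ih (Fin.succ_ne_zero _)
    have hi : (i.succ : ℕ) ≠ 0 := i.val.succ_ne_zero
    refine ⟨_, (inWeyl_reflect i.succ).comp hf, ?_, ?_⟩
    · rw [Function.comp_apply, h0, reflect_root_Eb_zero hi]
    · rw [Function.comp_apply, h1, Fin.succ_castSucc, reflect_root_Eb_castSucc hi]

theorem pencilClass_Eb_zero_sub (hr : 3 ≤ r) {i : Fin (r + 1)} (hi : i ≠ 0) :
    PencilClass r (Eb r 0 - Eb r i) := by
  obtain ⟨f, hf, h0, h1⟩ := exists_inWeyl_map_Eb hr hi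
  obtain ⟨e, rfl, -, -⟩ := hf.exists_linearEquiv hr
  exact ⟨e, hf, by rw [map_sub, h0, h1]⟩

theorem exceptional_Eb (hr : 3 ≤ r) {i : Fin (r + 1)} (hi : i ≠ 0) :
    Exceptional r (Eb r i) := by
  obtain ⟨f, hf, -, hfi⟩ := exists_inWeyl_map_Eb hr hi
  obtain ⟨g, hg, -, hgr⟩ := exists_inWeyl_map_Eb hr (i := Fin.last r)
    (by rw [Ne, Fin.last_eq_zero_iff]; omega)
  obtain ⟨e, rfl, he, -⟩ := hg.exists_linearEquiv hr
  have h1 : e.symm (Eb r (Fin.last r)) = Eb r 1 := by rw [← hgr, e.symm_apply_apply]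
  exact ⟨f ∘ e.symm, hf.comp he, by rw [Function.comp_apply, h1, hfi]⟩

/-- The exceptional class `E_0 - E_1 - E_2` of the line through the first two blown-up points. -/
def exceptionalLine (r : ℕ) : Fin (r + 1) → ℤ :=
  Eb r 0 - Eb r 1 - Eb r 2

theorem exceptional_exceptionalLine (hr : 3 ≤ r) : Exceptional r (exceptionalLine r) := by
  have h3 := (one_two_three_ne_zero hr).2.2
  let i : Fin r := ⟨0, by omega⟩
  have h : inter (Eb r 3) (root r i) = 1 := by
    rw [inter_comm, inter_Eb_of_ne_zero _ h3, root_apply_of_val_eq_zero hr rfl,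
      (val_one_two_three hr).2.2]
    rfl
  have hreflect : reflect (root r i) (Eb r 3) = exceptionalLine r := by
    rw [reflect, h, root_of_val_eq_zero rfl, exceptionalLine]
    abel
  exact hreflect ▸ (exceptional_Eb hr h3).map (inWeyl_reflect i)

theorem exceptionalLine_apply (hr : 3 ≤ r) (j : Fin (r + 1)) :
    exceptionalLine r j = if (j : ℕ) = 0 then 1 else if (j : ℕ) ≤ 2 then -1 else 0 := by
  simp only [exceptionalLine, Pi.sub_apply, Eb, Fin.ext_iff, Fin.val_zero, val_one_two_three hr]
  split_ifs <;> omega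

theorem inter_exceptionalLine (hr : 3 ≤ r) (x : Fin (r + 1) → ℤ) :
    inter x (exceptionalLine r) = x 0 + x 1 + x 2 := by
  obtain ⟨h1, h2, -⟩ := one_two_three_ne_zero hr
  rw [exceptionalLine, inter_sub_right, inter_sub_right, inter_Eb_zero,
    inter_Eb_of_ne_zero x h1, inter_Eb_of_ne_zero x h2]
  ring

theorem inter_exceptionalLine_self (hr : 3 ≤ r) :
    inter (exceptionalLine r) (exceptionalLine r) = -1 := by
  rw [inter_exceptionalLine hr]
  simp only [exceptionalLine_apply hr, Fin.val_zero, val_one_two_three hr]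
  rfl

theorem inter_exceptionalLine_Eb {i : Fin (r + 1)} (h0 : i ≠ 0) (h1 : i ≠ 1) (h2 : i ≠ 2) :
    inter (exceptionalLine r) (Eb r i) = 0 := by
  rw [inter_Eb_of_ne_zero _ h0]
  simp [exceptionalLine, Eb, h0, h1, h2]

end Orbits

section SemiStandard

variable {r : ℕ} {A F H : Fin (r + 1) → ℤ}

/-- A class which is positive on every simple root and a non-negative combination of the line class
`E_0` and the pencil classes `E_0 - E_i`. -/
def regularClass (r : ℕ) : Fin (r + 1) → ℤ :=
  (3 * r : ℤ) • Eb r 0 + ∑ i : Fin r, (r - i : ℤ) • (Eb r 0 - Eb r i.succ)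

theorem le_regularClass_zero : 3 * (r : ℤ) ≤ regularClass r 0 := by
  have h : regularClass r 0 = 3 * r + ∑ i : Fin r, (r - i : ℤ) := by
    simp only [regularClass, Pi.add_apply, Finset.sum_apply, Pi.smul_apply, Pi.sub_apply, Eb,
      (Fin.succ_ne_zero _).symm, if_true, if_false, smul_eq_mul, mul_one, sub_zero]
  rw [h]
  exact le_add_of_nonneg_right (sum_nonneg fun i _ => by omega)

theorem regularClass_apply_of_ne_zero {j : Fin (r + 1)} (hj : j ≠ 0) :
    regularClass r j = j - r - 1 := by
  obtain ⟨j, rfl⟩ := Fin.exists_succ_eq.mpr hj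
  simp only [regularClass, Pi.add_apply, Finset.sum_apply, Pi.smul_apply, Pi.sub_apply, Eb,
    Fin.succ_ne_zero, Fin.succ_inj, if_false, smul_eq_mul, mul_zero, zero_sub, mul_neg, mul_ite,
    mul_one, sum_neg_distrib, sum_ite_eq, mem_univ, if_true, Fin.val_succ, Nat.cast_succ]
  ring

theorem inter_regularClass_root_pos (hr : 3 ≤ r) (i : Fin r) :
    0 < inter (regularClass r) (root r i) := by
  by_cases hi : (i : ℕ) = 0
  · obtain ⟨h1, h2, h3⟩ := one_two_three_ne_zero hr
    rw [inter_root_of_val_eq_zero hr _ hi, regularClass_apply_of_ne_zero h1,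
      regularClass_apply_of_ne_zero h2, regularClass_apply_of_ne_zero h3]
    simp only [val_one_two_three hr]
    have := le_regularClass_zero (r := r)
    omega
  · rw [inter_root_of_val_ne_zero _ hi, regularClass_apply_of_ne_zero i.succ_ne_zero,
      regularClass_apply_of_ne_zero (castSucc_ne_zero_of_val_ne_zero hi)]
    simp

theorem inter_regularClass_nonneg (h0 : 0 ≤ inter H (Eb r 0))
    (hpencil : ∀ i : Fin r, 0 ≤ inter H (Eb r 0 - Eb r i.succ)) :
    0 ≤ inter H (regularClass r) := by
  rw [regularClass, inter_add_right, inter_smul_right, inter_sum_right]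
  refine add_nonneg (by positivity) (sum_nonneg fun i _ => ?_)
  rw [inter_smul_right]
  exact mul_nonneg (by omega) (hpencil i)

theorem semiStandard_iff (hr : 3 ≤ r) :
    SemiStandard r H ↔ ∀ C, LineClass r C ∨ PencilClass r C → 0 ≤ inter H C := by
  constructor
  · rintro ⟨f, hf, hfH⟩ C hC
    obtain ⟨hdom, hline, hpencil⟩ := (eSemiStandard_iff hr).mp hfH
    obtain ⟨e, rfl, -, hinter⟩ := hf.exists_linearEquiv hr
    rw [← hinter]
    rcases hC with hC | hC
    · obtain ⟨g, hg, hgC⟩ := hC.map hf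
      rw [hgC]
      exact hline.trans (hg.inter_le hr hdom (dominant_Eb_zero hr))
    · obtain ⟨g, hg, hgC⟩ := hC.map hf
      rw [hgC]
      exact hpencil.trans (hg.inter_le hr hdom (dominant_Eb_zero_sub_Eb_one hr))
  · intro hH
    have hmap : ∀ f, InWeyl r f → ∀ C, LineClass r C ∨ PencilClass r C → 0 ≤ inter (f H) C := by
      intro f hf C hC
      obtain ⟨e, rfl, he, hinter⟩ := hf.exists_linearEquiv hr
      rw [← e.apply_symm_apply C, hinter]
      exact hH _ (hC.imp (·.map he) (·.map he))
    have hline : LineClass r (Eb r 0) := ⟨id, inWeyl_id, rfl⟩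
    obtain ⟨f, hf, hdom⟩ := exists_inWeyl_dominant (inter_regularClass_root_pos hr)
      fun f hf => inter_regularClass_nonneg (hmap f hf _ (.inl hline)) fun i =>
        hmap f hf _ (.inr (pencilClass_Eb_zero_sub hr i.succ_ne_zero))
    exact ⟨f, hf, (eSemiStandard_iff hr).mpr ⟨hdom, hmap f hf _ (.inl hline),
      hmap f hf _ (.inr ⟨id, inWeyl_id, rfl⟩)⟩⟩

theorem Standard.semiStandard (hr : 3 ≤ r) (hA : Standard r A) : SemiStandard r A := by
  obtain ⟨f, hf, h1, hanti, hlast, -, h123⟩ := hA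
  have h1last := hanti 1 (Fin.last r) (by rw [(val_one_two_three hr).1]) (Fin.le_last _)
  exact ⟨f, hf, by omega, h1, hanti, h123⟩

theorem Exceptional.semiStandard (hr : 3 ≤ r) (hF : Exceptional r F) : SemiStandard r F := by
  obtain ⟨f, hf, rfl⟩ := hF
  obtain ⟨e, rfl, he, -⟩ := hf.exists_linearEquiv hr
  refine ⟨e.symm, he, ?_⟩
  rw [e.symm_apply_apply]
  obtain ⟨h1, h2, h3⟩ := val_one_two_three hr
  refine ⟨?_, ?_, fun i j _ hij => ?_, ?_⟩ <;>
    simp only [Eb, Fin.ext_iff, Fin.val_last, Fin.val_zero, h1, h2, h3] <;> split_ifs <;> omega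

end SemiStandard

theorem exists_fin_sum_pos {ι M : Type*} [Fintype ι] [AddCommGroup M] (n : ι → ℤ) (F : ι → M)
    (hn : ∀ i, 0 ≤ n i) :
    ∃ (s : ℕ) (e : Fin s ↪ ι), (∀ j, 0 < n (e j)) ∧
      ∑ j, n (e j) • F (e j) = ∑ i, n i • F i := by
  classical
  let e := (Fintype.equivFin {i // 0 < n i}).symm
  refine ⟨_, e.toEmbedding.trans (Function.Embedding.subtype _), fun j => (e j).2, ?_⟩
  calc ∑ j, n (e j) • F (e j)
      = ∑ i : {i // 0 < n i}, n i • F i := e.sum_comp fun i => n i • F i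
    _ = ∑ i with 0 < n i, n i • F i :=
        (sum_subtype {i | 0 < n i} (fun i => mem_filter_univ i) fun i => n i • F i).symm
    _ = ∑ i, n i • F i := sum_filter_of_ne fun i _ hi =>
        (hn i).lt_of_ne' fun h => hi (by rw [h, zero_smul])

section OrthogonalDecomposition

variable {r : ℕ} {H : Fin (r + 1) → ℤ}

/-- `H` is an orthogonal sum of a standard class and positive multiples of pairwise orthogonal
exceptional classes. -/
def HasOrthogonalDecomposition (r : ℕ) (H : Fin (r + 1) → ℤ) : Prop :=
  ∃ (A : Fin (r + 1) → ℤ) (s : ℕ) (n : Fin s → ℤ) (F : Fin s → (Fin (r + 1) → ℤ)),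
    Standard r A ∧ (∀ i, 0 < n i) ∧ (∀ i, Exceptional r (F i)) ∧
    (∀ i j, i ≠ j → inter (F i) (F j) = 0) ∧ (∀ i, inter A (F i) = 0) ∧
    H = A + ∑ i, n i • F i

theorem HasOrthogonalDecomposition.add_sum {ι : Type*} [Fintype ι] {A : Fin (r + 1) → ℤ}
    {n : ι → ℤ} {F : ι → Fin (r + 1) → ℤ} (hA : Standard r A) (hn : ∀ i, 0 ≤ n i)
    (hF : ∀ i, Exceptional r (F i))
    (hFF : ∀ i j, i ≠ j → 0 < n i → 0 < n j → inter (F i) (F j) = 0)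
    (hAF : ∀ i, 0 < n i → inter A (F i) = 0) :
    HasOrthogonalDecomposition r (A + ∑ i, n i • F i) := by
  obtain ⟨s, e, hpos, hsum⟩ := exists_fin_sum_pos n F hn
  exact ⟨A, s, n ∘ e, F ∘ e, hA, hpos, fun i => hF (e i),
    fun i j hij => hFF _ _ (e.injective.ne hij) (hpos i) (hpos j), fun i => hAF _ (hpos i),
    by rw [← hsum]; rfl⟩

theorem Standard.map (hr : 3 ≤ r) {f : (Fin (r + 1) → ℤ) → (Fin (r + 1) → ℤ)}
    (hH : Standard r H) (hf : InWeyl r f) : Standard r (f H) := by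
  obtain ⟨g, hg, hgH⟩ := hH
  obtain ⟨e, rfl, he, -⟩ := hf.exists_linearEquiv hr
  exact ⟨g ∘ e.symm, hg.comp he, by rwa [Function.comp_apply, e.symm_apply_apply]⟩

theorem HasOrthogonalDecomposition.map (hr : 3 ≤ r) {f : (Fin (r + 1) → ℤ) → (Fin (r + 1) → ℤ)}
    (hH : HasOrthogonalDecomposition r H) (hf : InWeyl r f) :
    HasOrthogonalDecomposition r (f H) := by
  obtain ⟨A, s, n, F, hA, hn, hF, hFF, hAF, rfl⟩ := hH
  have hfA := hA.map hr hf
  have hfF := fun i => (hF i).map hf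
  obtain ⟨e, rfl, -, hinter⟩ := hf.exists_linearEquiv hr
  refine ⟨e A, s, n, fun i => e (F i), hfA, hn, hfF, fun i j hij => ?_, fun i => ?_, ?_⟩
  · rw [hinter, hFF i j hij]
  · rw [hinter, hAF]
  · simp only [map_add, map_sum, map_smul]

theorem HasOrthogonalDecomposition.semiStandard (hr : 3 ≤ r)
    (hH : HasOrthogonalDecomposition r H) : SemiStandard r H := by
  obtain ⟨A, s, n, F, hA, hn, hF, -, -, rfl⟩ := hH
  refine (semiStandard_iff hr).mpr fun C hC => ?_
  rw [inter_comm, inter_add_right, inter_sum_right, inter_comm C]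
  simp only [inter_comm C, inter_smul_left]
  exact add_nonneg ((semiStandard_iff hr).mp (hA.semiStandard hr) C hC) <| sum_nonneg fun i _ =>
    mul_nonneg (hn i).le ((semiStandard_iff hr).mp ((hF i).semiStandard hr) C hC)

/-- The class obtained from `H = dE_0 - m_1E_1 - ⋯ - m_rE_r` by replacing every negative `m_i`
by `0`. -/
def standardPart (H : Fin (r + 1) → ℤ) : Fin (r + 1) → ℤ :=
  fun j => if j = 0 then H 0 else min (H j) 0

theorem standardPart_zero : standardPart H 0 = H 0 := if_pos rfl

theorem standardPart_of_ne_zero {j : Fin (r + 1)} (hj : j ≠ 0) :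
    standardPart H j = min (H j) 0 := if_neg hj

theorem standardPart_add_sum (H : Fin (r + 1) → ℤ) :
    standardPart H + ∑ i : Fin r, max (H i.succ) 0 • Eb r i.succ = H := by
  ext j
  simp only [Pi.add_apply, Finset.sum_apply, Pi.smul_apply, Eb, smul_eq_mul, mul_ite, mul_one,
    mul_zero]
  cases j using Fin.cases with
  | zero => simp [standardPart_zero, (Fin.succ_ne_zero _).symm]
  | succ j =>
    rw [standardPart_of_ne_zero j.succ_ne_zero]
    simp [Fin.succ_inj, min_add_max]

theorem inter_standardPart_Eb {j : Fin (r + 1)} (hj : 0 < H j) (hj0 : j ≠ 0) :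
    inter (standardPart H) (Eb r j) = 0 := by
  rw [inter_Eb_of_ne_zero _ hj0, standardPart_of_ne_zero hj0, min_eq_right hj.le, neg_zero]

theorem inter_standardPart_exceptionalLine (hr : 3 ≤ r) (h1 : H 1 ≤ 0) (h2 : H 2 ≤ 0) :
    inter (standardPart H) (exceptionalLine r) = inter H (exceptionalLine r) := by
  obtain ⟨hne1, hne2, -⟩ := one_two_three_ne_zero hr
  rw [inter_exceptionalLine hr, inter_exceptionalLine hr, standardPart_zero,
    standardPart_of_ne_zero hne1, standardPart_of_ne_zero hne2, min_eq_left h1, min_eq_left h2]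

theorem ESemiStandard.apply_one_le_apply_two (hr : 3 ≤ r) (hH : ESemiStandard r H) :
    H 1 ≤ H 2 := by
  obtain ⟨h1, h2, -⟩ := val_one_two_three hr
  exact neg_le_neg_iff.mp (hH.2.2.1 1 2 h1.ge (Fin.le_def.mpr (by omega)))

theorem ESemiStandard.apply_two_le_apply_three (hr : 3 ≤ r) (hH : ESemiStandard r H) :
    H 2 ≤ H 3 := by
  obtain ⟨-, h2, h3⟩ := val_one_two_three hr
  exact neg_le_neg_iff.mp (hH.2.2.1 2 3 (by omega) (Fin.le_def.mpr (by omega)))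

theorem ESemiStandard.eStandard_standardPart (hr : 3 ≤ r) (hH : ESemiStandard r H)
    (hL : 0 ≤ inter H (exceptionalLine r)) : EStandard r (standardPart H) := by
  have h12 := hH.apply_one_le_apply_two hr
  have h23 := hH.apply_two_le_apply_three hr
  obtain ⟨h0, h1, hanti, h123⟩ := hH
  rw [inter_exceptionalLine hr] at hL
  obtain ⟨hne1, hne2, hne3⟩ := one_two_three_ne_zero hr
  have hlast : Fin.last r ≠ 0 := by rw [Ne, Fin.last_eq_zero_iff]; omega
  unfold EStandard
  rw [standardPart_zero, standardPart_of_ne_zero hne1, standardPart_of_ne_zero hne2,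
    standardPart_of_ne_zero hne3, standardPart_of_ne_zero hlast]
  refine ⟨by omega, fun i j hi hij => ?_, by omega, by omega, by omega⟩
  rw [standardPart_of_ne_zero (Fin.pos_iff_ne_zero.mp hi),
    standardPart_of_ne_zero (Fin.pos_iff_ne_zero.mp (Nat.lt_of_lt_of_le hi hij))]
  exact neg_le_neg (min_le_min_right 0 (neg_le_neg_iff.mp (hanti i j hi hij)))

theorem add_smul_exceptionalLine_apply (hr : 3 ≤ r) (c : ℤ) (j : Fin (r + 1)) :
    (H + c • exceptionalLine r) j =
      if (j : ℕ) = 0 then H j + c else if (j : ℕ) ≤ 2 then H j - c else H j := by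
  rw [Pi.add_apply, Pi.smul_apply, exceptionalLine_apply hr, smul_eq_mul]
  split_ifs <;> ring

theorem ESemiStandard.add_smul_exceptionalLine (hr : 3 ≤ r) (hH : ESemiStandard r H)
    (hL : inter H (exceptionalLine r) < 0) :
    ESemiStandard r (H + inter H (exceptionalLine r) • exceptionalLine r) := by
  have h12 := hH.apply_one_le_apply_two hr
  obtain ⟨-, h1, hanti, h123⟩ := hH
  set c := inter H (exceptionalLine r) with hc
  rw [inter_exceptionalLine hr] at hc
  obtain ⟨hv1, hv2, hv3⟩ := val_one_two_three hr
  unfold ESemiStandard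
  simp only [add_smul_exceptionalLine_apply hr, Fin.val_zero, hv1, hv2, hv3, reduceIte,
    Nat.reduceLeDiff, OfNat.ofNat_ne_zero, one_ne_zero]
  refine ⟨by linarith, by linarith, fun i j hi hij => ?_, by linarith⟩
  have hHij := hanti i j hi hij
  by_cases hi2 : (i : ℕ) ≤ 2 ∧ 2 < (j : ℕ)
  · have hHi2 := hanti i 2 hi (Fin.le_def.mpr (by omega))
    have hH3j := hanti 3 j (by omega) (Fin.le_def.mpr (by omega))
    split_ifs <;> omega
  · split_ifs <;> omega

theorem ESemiStandard.add_smul_exceptionalLine_nonpos (hr : 3 ≤ r) (hH : ESemiStandard r H) :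
    (H + inter H (exceptionalLine r) • exceptionalLine r) 1 ≤ 0 ∧
      (H + inter H (exceptionalLine r) • exceptionalLine r) 2 ≤ 0 := by
  have h12 := hH.apply_one_le_apply_two hr
  obtain ⟨-, h1, -⟩ := hH
  simp only [add_smul_exceptionalLine_apply hr, inter_exceptionalLine hr, val_one_two_three hr,
    reduceIte, Nat.reduceLeDiff, OfNat.ofNat_ne_zero, one_ne_zero]
  constructor <;> linarith

/- If `c` is positive, then `E_1` and `E_2`, which are not orthogonal to the exceptional line, do
not occur in the decomposition. -/
theorem ESemiStandard.hasOrthogonalDecomposition_add_smul (hr : 3 ≤ r) (hH : ESemiStandard r H)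
    (hL : 0 ≤ inter H (exceptionalLine r)) {c : ℤ} (hc : 0 ≤ c)
    (hpos : 0 < c → inter H (exceptionalLine r) = 0 ∧ H 1 ≤ 0 ∧ H 2 ≤ 0) :
    HasOrthogonalDecomposition r (H + c • exceptionalLine r) := by
  let n : Fin (r + 1) → ℤ := Fin.cons c fun i => max (H i.succ) 0
  let F : Fin (r + 1) → Fin (r + 1) → ℤ := Fin.cons (exceptionalLine r) fun i => Eb r i.succ
  have hF : ∀ i, Exceptional r (F i) :=
    Fin.cases (exceptional_exceptionalLine hr) fun i => exceptional_Eb hr i.succ_ne_zero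
  have hn : ∀ i : Fin r, 0 < n i.succ → 0 < H i.succ := fun i hi =>
    (lt_max_iff.mp hi).resolve_right (lt_irrefl 0)
  have hLE : ∀ i : Fin r, 0 < c → 0 < n i.succ → inter (F 0) (F i.succ) = 0 := by
    intro i hc hi
    obtain ⟨-, h1, h2⟩ := hpos hc
    exact inter_exceptionalLine_Eb i.succ_ne_zero (fun h => h1.not_gt (h ▸ hn i hi))
      (fun h => h2.not_gt (h ▸ hn i hi))
  have hFF : ∀ i j, i ≠ j → 0 < n i → 0 < n j → inter (F i) (F j) = 0 := by
    intro i j hij hi hj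
    cases i using Fin.cases <;> cases j using Fin.cases
    · exact absurd rfl hij
    · exact hLE _ hi hj
    · rw [inter_comm]
      exact hLE _ hj hi
    · exact inter_Eb_Eb (Fin.succ_ne_zero _) hij
  have hAF : ∀ i, 0 < n i → inter (standardPart H) (F i) = 0 := by
    refine Fin.cases (fun hc => ?_) fun i hi => inter_standardPart_Eb (hn i hi) i.succ_ne_zero
    obtain ⟨hHL, h1, h2⟩ := hpos hc
    exact (inter_standardPart_exceptionalLine hr h1 h2).trans hHL
  have hsum : H + c • exceptionalLine r = standardPart H + ∑ i, n i • F i :=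
    calc H + c • exceptionalLine r
        = standardPart H + ∑ i : Fin r, max (H i.succ) 0 • Eb r i.succ + c • exceptionalLine r := by
          rw [standardPart_add_sum]
      _ = standardPart H + ∑ i, n i • F i := by
          rw [Fin.sum_univ_succ, add_assoc, add_comm _ (c • _)]
          rfl
  rw [hsum]
  exact .add_sum ⟨id, inWeyl_id, hH.eStandard_standardPart hr hL⟩
    (Fin.cases hc fun i => le_max_right _ _) hF hFF hAF

theorem ESemiStandard.hasOrthogonalDecomposition (hr : 3 ≤ r) (hH : ESemiStandard r H) :
    HasOrthogonalDecomposition r H := by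
  set L := exceptionalLine r
  rcases le_or_gt 0 (inter H L) with hL | hL
  · simpa using hH.hasOrthogonalDecomposition_add_smul hr hL le_rfl fun h => absurd h (lt_irrefl 0)
  set H' := H + inter H L • L with hH'
  have hHL' : inter H' L = 0 := by
    rw [hH', inter_add_left, inter_smul_left, inter_exceptionalLine_self hr]
    ring
  have hsub : H = H' + (-inter H L) • L := by rw [hH', neg_smul, add_neg_cancel_right]
  rw [hsub]
  exact (hH.add_smul_exceptionalLine hr hL).hasOrthogonalDecomposition_add_smul hr hHL'.ge
    (neg_nonneg.mpr hL.le) fun _ => ⟨hHL', hH.add_smul_exceptionalLine_nonpos hr⟩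

end OrthogonalDecomposition

/-- A class `H` in `Pic_r` is semi-standard if and only if it can be written as an
orthogonal sum `H = A + n_1F_1 + ⋯ + n_sF_s` (`s = 0` allowed), where `A` is
standard, each `n_i > 0`, the `F_i` are pairwise orthogonal exceptional classes and
`A·F_i = 0` for all `i`. -/
theorem semistandard_iff_orthogonal_decomposition (r : ℕ) (hr : 3 ≤ r)
    (H : Fin (r + 1) → ℤ) :
    SemiStandard r H ↔
      ∃ (A : Fin (r + 1) → ℤ) (s : ℕ) (n : Fin s → ℤ)
        (F : Fin s → (Fin (r + 1) → ℤ)),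
        Standard r A ∧
        (∀ i, 0 < n i) ∧
        (∀ i, Exceptional r (F i)) ∧
        (∀ i j, i ≠ j → inter (F i) (F j) = 0) ∧
        (∀ i, inter A (F i) = 0) ∧
        H = A + ∑ i, n i • F i := by
  change SemiStandard r H ↔ HasOrthogonalDecomposition r H
  constructor
  · rintro ⟨f, hf, hH⟩
    obtain ⟨e, rfl, he, -⟩ := hf.exists_linearEquiv hr
    simpa only [e.symm_apply_apply] using (hH.hasOrthogonalDecomposition hr).map hr he
  · exact HasOrthogonalDecomposition.semiStandard hr
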